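/- For all positive integers ℓ, m, n, the map f0 satisfies f0(p) = (0,0) at each of the four points p1 = ((ℓ+m)/(m+n), (ℓ+n)/(m+n)), p2 = ((ℓ+m)/(m+n), (ℓ+2m+n)/(m+n)), p3 = ((ℓ+m)/(2ℓ+m+n), (ℓ+n)/(2ℓ+m+n)), p4 = ((ℓ+m+2n)/(m+n), (ℓ+n)/(m+n)); f0 is differentiable at each of these points, and the Jacobian determinant of f0 there equals, respectively: ℓmn(m+n)³/(6√3·(ℓ²(m+n) + ℓ(m²+4mn+n²) + mn(m+n))²) at p1; −m(m+n)²/(6√3·(ℓ+m)(ℓ+2m+n)²) at p2; −ℓ(2ℓ+m+n)/(6√3·(ℓ+m)(ℓ+n)) at p3; and −n(m+n)²/(6√3·(ℓ+n)(ℓ+m+2n)²) at p4. In particular each of these Jacobians is nonzero. -/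

import Mathlib

/-!
At each of the four points the three Ricci components agree, `r1 = r2 = r3 = lam > 0`: the metric is
Einstein. Write `f0 = (A / (√2 W), B / (√6 W))` with `A = r1 - r2`, `B = r1 + r2 - 2 r3` and
`W = s + (r1 + r2 + r3) / √3`, where `s` is the Euclidean norm of `(r1, r2, r3)`. Since `A` and `B`
vanish at the point and `W = 2 √3 lam` there, the derivative of `W` never enters
(`hasFDerivAt_div_of_zero`), and the Jacobian determinant of `f0` is that of `(A, B)` divided by
`√2 √6 W² = 24 √3 lam²` (`f0_at_einstein_point`). What is left is a rational identity in `ℓ, m, n`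
for each point.
-/

noncomputable section

/-- Component `r1` of the Ricci tensor on the flag manifold
`SU(N)/S(U(ℓ)×U(m)×U(n))`, `N = ℓ+m+n`. -/
def r1 (l m n x1 x2 x3 : ℝ) : ℝ :=
  1 / (2 * x1) + (n / (4 * (l + m + n))) * ((x1 ^ 2 - x2 ^ 2 - x3 ^ 2) / (x1 * x2 * x3))

def r2 (l m n x1 x2 x3 : ℝ) : ℝ :=
  1 / (2 * x2) + (m / (4 * (l + m + n))) * ((x2 ^ 2 - x1 ^ 2 - x3 ^ 2) / (x1 * x2 * x3))

def r3 (l m n x1 x2 x3 : ℝ) : ℝ :=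
  1 / (2 * x3) + (l / (4 * (l + m + n))) * ((x3 ^ 2 - x1 ^ 2 - x2 ^ 2) / (x1 * x2 * x3))


/-- The normalized Ricci map `F0 : ℝ₊² → S² ⊂ ℝ³`, evaluated at `(x1, x2, 1)`. -/
def F0 (l m n : ℝ) (p : ℝ × ℝ) : ℝ × ℝ × ℝ :=
  let a := r1 l m n p.1 p.2 1
  let b := r2 l m n p.1 p.2 1
  let c := r3 l m n p.1 p.2 1
  let s := Real.sqrt (a ^ 2 + b ^ 2 + c ^ 2)
  (a / s, b / s, c / s)

/-- The rotation `P` mapping `(1/√3, 1/√3, 1/√3)` to `(0,0,1)`. -/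
def Pmap (v : ℝ × ℝ × ℝ) : ℝ × ℝ × ℝ :=
  ((v.1 - v.2.1) / Real.sqrt 2, (v.1 + v.2.1 - 2 * v.2.2) / Real.sqrt 6,
    (v.1 + v.2.1 + v.2.2) / Real.sqrt 3)

/-- Stereographic projection of the unit 2-sphere minus `(0,0,-1)`. -/
def psi (v : ℝ × ℝ × ℝ) : ℝ × ℝ := (v.1 / (1 + v.2.2), v.2.1 / (1 + v.2.2))

/-- The map `f0 = ψ ∘ P ∘ F0`. -/
def f0 (l m n : ℝ) (p : ℝ × ℝ) : ℝ × ℝ := psi (Pmap (F0 l m n p))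

/-- At a zero of the numerator the derivative of the denominator does not contribute to the
derivative of a quotient. -/
lemma hasFDerivAt_div_of_zero {A W : ℝ × ℝ → ℝ} {A' W' : ℝ × ℝ →L[ℝ] ℝ} {p : ℝ × ℝ} {w : ℝ}
    (hA : HasFDerivAt A A' p) (hW : HasFDerivAt W W' p) (h0 : A p = 0) (hw : W p = w)
    (hne : w ≠ 0) :
    HasFDerivAt (fun q => A q / W q) (w⁻¹ • A') p := by
  have hi : HasFDerivAt (fun q => (W q)⁻¹) (-(W p ^ 2)⁻¹ • W') p :=
    (hasDerivAt_inv (hw ▸ hne)).comp_hasFDerivAt p hW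
  have h := hA.mul hi
  refine (h.congr_fderiv ?_)
  rw [h0, hw]
  simp

/-- The Jacobian determinant of a map `ℝ² → ℝ²` given by two gradients `(a, b)` and `(c, d)`. -/
lemma det_prod_grad (a b c d : ℝ) :
    LinearMap.det (((a • ContinuousLinearMap.fst ℝ ℝ ℝ + b • ContinuousLinearMap.snd ℝ ℝ ℝ).prod
      (c • ContinuousLinearMap.fst ℝ ℝ ℝ + d • ContinuousLinearMap.snd ℝ ℝ ℝ) :
        ℝ × ℝ →L[ℝ] ℝ × ℝ)).toLinearMap = a * d - b * c := by
  rw [← LinearMap.det_toMatrix (Module.Basis.finTwoProd ℝ), Matrix.det_fin_two]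
  simp [LinearMap.toMatrix_apply]

/-- The gradient of a linear combination of `1`, `1 / x`, `1 / y`, `x / y`, `y / x`, `1 / (x y)`;
on the slice `x3 = 1` each of `r1`, `r2`, `r3` is of this form. -/
lemma hasFDerivAt_ricci (e0 e1 e2 k1 k2 k3 x y : ℝ) (hx : 0 < x) (hy : 0 < y) :
    HasFDerivAt (fun q : ℝ × ℝ => e0 + e1 * q.1⁻¹ + e2 * q.2⁻¹
        + (k1 * (q.1 * q.2⁻¹) + k2 * (q.2 * q.1⁻¹) + k3 * (q.1⁻¹ * q.2⁻¹)))
      ((-e1 / x ^ 2 + (k1 / y - k2 * y / x ^ 2 - k3 / (x ^ 2 * y))) • ContinuousLinearMap.fst ℝ ℝ ℝ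
        + (-e2 / y ^ 2 + (-k1 * x / y ^ 2 + k2 / x - k3 / (x * y ^ 2)))
          • ContinuousLinearMap.snd ℝ ℝ ℝ) (x, y) := by
  have h1 : HasFDerivAt (fun q : ℝ × ℝ => q.1) (ContinuousLinearMap.fst ℝ ℝ ℝ) (x, y) :=
    hasFDerivAt_fst
  have h2 : HasFDerivAt (fun q : ℝ × ℝ => q.2) (ContinuousLinearMap.snd ℝ ℝ ℝ) (x, y) :=
    hasFDerivAt_snd
  have u : HasFDerivAt (fun q : ℝ × ℝ => q.1⁻¹)
      (-(x ^ 2)⁻¹ • ContinuousLinearMap.fst ℝ ℝ ℝ) (x, y) :=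
    (hasDerivAt_inv hx.ne').comp_hasFDerivAt (x, y) h1
  have v : HasFDerivAt (fun q : ℝ × ℝ => q.2⁻¹)
      (-(y ^ 2)⁻¹ • ContinuousLinearMap.snd ℝ ℝ ℝ) (x, y) :=
    (hasDerivAt_inv hy.ne').comp_hasFDerivAt (x, y) h2
  have h := (((u.const_mul e1).const_add e0).add (v.const_mul e2)).add
    ((((h1.mul v).const_mul k1).add ((h2.mul u).const_mul k2)).add ((u.mul v).const_mul k3))
  refine (h.congr_fderiv ?_)
  ext <;> simp <;> field_simp <;> ring

lemma r1_slice (l m n x y : ℝ) (hx : 0 < x) (hy : 0 < y) :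
    r1 l m n x y 1 = 0 + 1 / 2 * x⁻¹ + 0 * y⁻¹ + (n / (4 * (l + m + n)) * (x * y⁻¹)
      + -(n / (4 * (l + m + n))) * (y * x⁻¹) + -(n / (4 * (l + m + n))) * (x⁻¹ * y⁻¹)) := by
  unfold r1
  generalize n / (4 * (l + m + n)) = k
  field_simp
  ring

lemma r2_slice (l m n x y : ℝ) (hx : 0 < x) (hy : 0 < y) :
    r2 l m n x y 1 = 0 + 0 * x⁻¹ + 1 / 2 * y⁻¹ + (-(m / (4 * (l + m + n))) * (x * y⁻¹)
      + m / (4 * (l + m + n)) * (y * x⁻¹) + -(m / (4 * (l + m + n))) * (x⁻¹ * y⁻¹)) := by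
  unfold r2
  generalize m / (4 * (l + m + n)) = k
  field_simp
  ring

lemma r3_slice (l m n x y : ℝ) (hx : 0 < x) (hy : 0 < y) :
    r3 l m n x y 1 = 1 / 2 + 0 * x⁻¹ + 0 * y⁻¹ + (-(l / (4 * (l + m + n))) * (x * y⁻¹)
      + -(l / (4 * (l + m + n))) * (y * x⁻¹) + l / (4 * (l + m + n)) * (x⁻¹ * y⁻¹)) := by
  unfold r3
  generalize l / (4 * (l + m + n)) = k
  field_simp
  ring

/-- If the Ricci components `a, b, c` take a common positive value `lam` at `p`, then `f0` vanishes
at `p` and its Jacobian determinant is that of `(a - b, a + b - 2 c)` divided by `24 √3 lam ^ 2`. -/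
lemma f0_of_grads {l m n : ℝ} {p : ℝ × ℝ} {lam a1 a2 b1 b2 c1 c2 J : ℝ} (hlam : 0 < lam)
    (ha : r1 l m n p.1 p.2 1 = lam) (hb : r2 l m n p.1 p.2 1 = lam)
    (hc : r3 l m n p.1 p.2 1 = lam)
    (ha' : HasFDerivAt (fun q : ℝ × ℝ => r1 l m n q.1 q.2 1)
      (a1 • ContinuousLinearMap.fst ℝ ℝ ℝ + a2 • ContinuousLinearMap.snd ℝ ℝ ℝ) p)
    (hb' : HasFDerivAt (fun q : ℝ × ℝ => r2 l m n q.1 q.2 1)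
      (b1 • ContinuousLinearMap.fst ℝ ℝ ℝ + b2 • ContinuousLinearMap.snd ℝ ℝ ℝ) p)
    (hc' : HasFDerivAt (fun q : ℝ × ℝ => r3 l m n q.1 q.2 1)
      (c1 • ContinuousLinearMap.fst ℝ ℝ ℝ + c2 • ContinuousLinearMap.snd ℝ ℝ ℝ) p)
    (hJ : ((a1 - b1) * (a2 + b2 - 2 * c2) - (a2 - b2) * (a1 + b1 - 2 * c1))
      / (24 * Real.sqrt 3 * lam ^ 2) = J) :
    f0 l m n p = (0, 0) ∧ DifferentiableAt ℝ (f0 l m n) p ∧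
      LinearMap.det (fderiv ℝ (f0 l m n) p).toLinearMap = J := by
  have h3 : (0 : ℝ) < Real.sqrt 3 := by positivity
  have h33 : Real.sqrt 3 ^ 2 = 3 := Real.sq_sqrt (by norm_num)
  have hzero : f0 l m n p = (0, 0) := by
    simp only [f0, psi, Pmap, F0, ha, hb, hc, Prod.mk.injEq]
    constructor
    · simp
    · rw [div_eq_zero_iff, div_eq_zero_iff]
      left; left; ring
  have hS : HasFDerivAt (fun q : ℝ × ℝ => r1 l m n q.1 q.2 1 ^ 2 + r2 l m n q.1 q.2 1 ^ 2
      + r3 l m n q.1 q.2 1 ^ 2) _ p := ((ha'.pow 2).add (hb'.pow 2)).add (hc'.pow 2)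
  have hSne : r1 l m n p.1 p.2 1 ^ 2 + r2 l m n p.1 p.2 1 ^ 2 + r3 l m n p.1 p.2 1 ^ 2 ≠ 0 := by
    rw [ha, hb, hc]; positivity
  have hSp : Real.sqrt (r1 l m n p.1 p.2 1 ^ 2 + r2 l m n p.1 p.2 1 ^ 2
      + r3 l m n p.1 p.2 1 ^ 2) = Real.sqrt 3 * lam := by
    rw [ha, hb, hc, show lam ^ 2 + lam ^ 2 + lam ^ 2 = 3 * lam ^ 2 by ring,
      Real.sqrt_mul (by norm_num), Real.sqrt_sq hlam.le]
  have hs := hS.sqrt hSne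
  have hW := hs.add (((ha'.add hb').add hc').mul_const (Real.sqrt 3)⁻¹)
  have hWp : Real.sqrt (r1 l m n p.1 p.2 1 ^ 2 + r2 l m n p.1 p.2 1 ^ 2
      + r3 l m n p.1 p.2 1 ^ 2) + (r1 l m n p.1 p.2 1 + r2 l m n p.1 p.2 1
      + r3 l m n p.1 p.2 1) * (Real.sqrt 3)⁻¹ = 2 * Real.sqrt 3 * lam := by
    rw [hSp, ha, hb, hc]
    field_simp
    rw [h33]; ring
  have hX := hasFDerivAt_div_of_zero ((ha'.sub hb').mul_const (Real.sqrt 2)⁻¹) hW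
    (by simp [ha, hb]) hWp (by positivity)
  have hY := hasFDerivAt_div_of_zero
    (((ha'.add hb').sub (hc'.const_mul 2)).mul_const (Real.sqrt 6)⁻¹) hW
    (by simp only [Pi.add_apply, Pi.sub_apply, ha, hb, hc]; ring) hWp (by positivity)
  have hXY := hX.prodMk hY
  have hf := hXY.congr_of_eventuallyEq (f₁ := f0 l m n) (by
    filter_upwards [hs.continuousAt.eventually_ne (by rw [hSp]; positivity : _ ≠ (0 : ℝ))]
      with q hq
    simp only [f0, psi, Pmap, F0, Pi.add_apply, Pi.sub_apply]
    -- Multiplying numerator and denominator of the stereographic projection by the norm `s`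
    -- is harmless even where the denominator vanishes.
    have key : ∀ a b c s t : ℝ, s ≠ 0 →
        (a / s - b / s) / t / (1 + (a / s + b / s + c / s) / Real.sqrt 3)
        = (a - b) * t⁻¹ / (s + (a + b + c) * (Real.sqrt 3)⁻¹) := by
      intro a b c s t hs0
      rw [← mul_div_mul_left _ (1 + (a / s + b / s + c / s) / Real.sqrt 3) hs0]
      congr 1 <;> field_simp
    have key' : ∀ a b c s t : ℝ, s ≠ 0 →
        (a / s + b / s - 2 * (c / s)) / t / (1 + (a / s + b / s + c / s) / Real.sqrt 3)
        = (a + b - 2 * c) * t⁻¹ / (s + (a + b + c) * (Real.sqrt 3)⁻¹) := by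
      intro a b c s t hs0
      rw [← mul_div_mul_left _ (1 + (a / s + b / s + c / s) / Real.sqrt 3) hs0]
      congr 1 <;> field_simp
    exact Prod.ext (key _ _ _ _ _ hq) (key' _ _ _ _ _ hq))
  refine ⟨hzero, hf.differentiableAt, ?_⟩
  have hD := hf.congr_fderiv (g' :=
    (((2 * Real.sqrt 3 * lam)⁻¹ * (Real.sqrt 2)⁻¹ * (a1 - b1)) • ContinuousLinearMap.fst ℝ ℝ ℝ
      + ((2 * Real.sqrt 3 * lam)⁻¹ * (Real.sqrt 2)⁻¹ * (a2 - b2))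
        • ContinuousLinearMap.snd ℝ ℝ ℝ).prod
    (((2 * Real.sqrt 3 * lam)⁻¹ * (Real.sqrt 6)⁻¹ * (a1 + b1 - 2 * c1))
        • ContinuousLinearMap.fst ℝ ℝ ℝ
      + ((2 * Real.sqrt 3 * lam)⁻¹ * (Real.sqrt 6)⁻¹ * (a2 + b2 - 2 * c2))
        • ContinuousLinearMap.snd ℝ ℝ ℝ)) (by ext <;> simp <;> ring)
  rw [hD.fderiv, det_prod_grad, ← hJ]
  have h26 : Real.sqrt 6 = Real.sqrt 2 * Real.sqrt 3 := by
    rw [← Real.sqrt_mul (by norm_num)]; norm_num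
  have h22 : Real.sqrt 2 ^ 2 = 2 := Real.sq_sqrt (by norm_num)
  rw [h26]
  have h2 : (0 : ℝ) < Real.sqrt 2 := by positivity
  generalize Real.sqrt 2 = s2 at *
  generalize Real.sqrt 3 = s3 at *
  field_simp
  rw [h22, h33]
  ring

/-- `f0_of_grads` with the gradients of the Ricci components written out. -/
lemma f0_at_einstein_point {l m n x y lam J u v w : ℝ} (hx : 0 < x) (hy : 0 < y) (hlam : 0 < lam)
    (hu : u = n / (4 * (l + m + n))) (hv : v = m / (4 * (l + m + n)))
    (hw : w = l / (4 * (l + m + n)))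
    (ha : r1 l m n x y 1 = lam) (hb : r2 l m n x y 1 = lam) (hc : r3 l m n x y 1 = lam)
    (hJne : J ≠ 0)
    (hJ : (((-(1 / 2) / x ^ 2 + (u / y + u * y / x ^ 2 + u / (x ^ 2 * y)))
          - (v * (-1 / y - y / x ^ 2 + 1 / (x ^ 2 * y))))
        * ((u * (-x / y ^ 2 - 1 / x + 1 / (x * y ^ 2)))
          + (-(1 / 2) / y ^ 2 + (v * x / y ^ 2 + v / x + v / (x * y ^ 2)))
          - 2 * (w * (x / y ^ 2 - 1 / x - 1 / (x * y ^ 2))))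
        - ((u * (-x / y ^ 2 - 1 / x + 1 / (x * y ^ 2)))
          - (-(1 / 2) / y ^ 2 + (v * x / y ^ 2 + v / x + v / (x * y ^ 2))))
        * ((-(1 / 2) / x ^ 2 + (u / y + u * y / x ^ 2 + u / (x ^ 2 * y)))
          + (v * (-1 / y - y / x ^ 2 + 1 / (x ^ 2 * y)))
          - 2 * (w * (-1 / y + y / x ^ 2 - 1 / (x ^ 2 * y)))))
      / (24 * Real.sqrt 3 * lam ^ 2) = J) :
    f0 l m n (x, y) = (0, 0) ∧ DifferentiableAt ℝ (f0 l m n) (x, y) ∧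
      LinearMap.det (fderiv ℝ (f0 l m n) (x, y)).toLinearMap = J ∧ J ≠ 0 := by
  have hev : ∀ᶠ q : ℝ × ℝ in nhds (x, y), 0 < q.1 ∧ 0 < q.2 :=
    (continuousAt_fst.eventually (lt_mem_nhds hx)).and
      (continuousAt_snd.eventually (lt_mem_nhds hy))
  have h1 := (hasFDerivAt_ricci _ _ _ _ _ _ x y hx hy).congr_of_eventuallyEq
    (hev.mono fun q hq => r1_slice l m n q.1 q.2 hq.1 hq.2)
  have h2 := (hasFDerivAt_ricci _ _ _ _ _ _ x y hx hy).congr_of_eventuallyEq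
    (hev.mono fun q hq => r2_slice l m n q.1 q.2 hq.1 hq.2)
  have h3 := (hasFDerivAt_ricci _ _ _ _ _ _ x y hx hy).congr_of_eventuallyEq
    (hev.mono fun q hq => r3_slice l m n q.1 q.2 hq.1 hq.2)
  have h := f0_of_grads (J := J) (p := (x, y)) hlam ha hb hc h1 h2 h3 (by
    rw [← hJ, ← hu, ← hv, ← hw]
    congr 1
    ring)
  exact ⟨h.1, h.2.1, h.2.2, hJne⟩

/-- `(0,0)` is a regular value of `f0`: at each of the four Einstein points of the flag
manifold `SU(N)/S(U(ℓ)×U(m)×U(n))` the map `f0` vanishes, is differentiable, and its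
Jacobian determinant takes the indicated nonzero value. -/
theorem jacobians_of_f0_at_flag_einstein_points (l m n : ℕ)
    (hl : 0 < l) (hm : 0 < m) (hn : 0 < n) :
    let L : ℝ := l; let M : ℝ := m; let N : ℝ := n
    let p1 : ℝ × ℝ := ((L + M) / (M + N), (L + N) / (M + N))
    let p2 : ℝ × ℝ := ((L + M) / (M + N), (L + 2 * M + N) / (M + N))
    let p3 : ℝ × ℝ := ((L + M) / (2 * L + M + N), (L + N) / (2 * L + M + N))
    let p4 : ℝ × ℝ := ((L + M + 2 * N) / (M + N), (L + N) / (M + N))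
    let J1 : ℝ := L * M * N * (M + N) ^ 3 /
      (6 * Real.sqrt 3 * (L ^ 2 * (M + N) + L * (M ^ 2 + 4 * M * N + N ^ 2)
        + M * N * (M + N)) ^ 2)
    let J2 : ℝ := -(M * (M + N) ^ 2) / (6 * Real.sqrt 3 * (L + M) * (L + 2 * M + N) ^ 2)
    let J3 : ℝ := -(L * (2 * L + M + N)) / (6 * Real.sqrt 3 * (L + M) * (L + N))
    let J4 : ℝ := -(N * (M + N) ^ 2) / (6 * Real.sqrt 3 * (L + N) * (L + M + 2 * N) ^ 2)
    (f0 L M N p1 = (0, 0) ∧ DifferentiableAt ℝ (f0 L M N) p1 ∧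
      LinearMap.det (fderiv ℝ (f0 L M N) p1).toLinearMap = J1 ∧ J1 ≠ 0) ∧
    (f0 L M N p2 = (0, 0) ∧ DifferentiableAt ℝ (f0 L M N) p2 ∧
      LinearMap.det (fderiv ℝ (f0 L M N) p2).toLinearMap = J2 ∧ J2 ≠ 0) ∧
    (f0 L M N p3 = (0, 0) ∧ DifferentiableAt ℝ (f0 L M N) p3 ∧
      LinearMap.det (fderiv ℝ (f0 L M N) p3).toLinearMap = J3 ∧ J3 ≠ 0) ∧
    (f0 L M N p4 = (0, 0) ∧ DifferentiableAt ℝ (f0 L M N) p4 ∧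
      LinearMap.det (fderiv ℝ (f0 L M N) p4).toLinearMap = J4 ∧ J4 ≠ 0) := by
  intro L M N p1 p2 p3 p4 J1 J2 J3 J4
  have hL : 0 < L := Nat.cast_pos.mpr hl
  have hM : 0 < M := Nat.cast_pos.mpr hm
  have hN : 0 < N := Nat.cast_pos.mpr hn
  clear_value L M N
  have h3 : (0 : ℝ) < Real.sqrt 3 := by positivity
  refine ⟨?_, ?_, ?_, ?_⟩
  · refine f0_at_einstein_point
      (lam := (L ^ 2 * (M + N) + L * (M ^ 2 + 4 * M * N + N ^ 2) + M * N * (M + N))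
        / (2 * (L + M + N) * (L + M) * (L + N)))
      (by positivity) (by positivity) (by positivity) rfl rfl rfl ?_ ?_ ?_ ?_ ?_
    · unfold r1; field_simp; ring
    · unfold r2; field_simp; ring
    · unfold r3; field_simp; ring
    · positivity
    · simp only [J1]; field_simp; ring
  · refine f0_at_einstein_point (lam := (M + N) / (2 * (L + M + N)))
      (by positivity) (by positivity) (by positivity) rfl rfl rfl ?_ ?_ ?_ ?_ ?_
    · unfold r1; field_simp; ring
    · unfold r2; field_simp; ring
    · unfold r3; field_simp; ring
    · simp only [J2]; rw [neg_div]; exact neg_ne_zero.mpr (by positivity)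
    · simp only [J2]; field_simp; ring
  · refine f0_at_einstein_point (lam := (2 * L + M + N) / (2 * (L + M + N)))
      (by positivity) (by positivity) (by positivity) rfl rfl rfl ?_ ?_ ?_ ?_ ?_
    · unfold r1; field_simp; ring
    · unfold r2; field_simp; ring
    · unfold r3; field_simp; ring
    · simp only [J3]; rw [neg_div]; exact neg_ne_zero.mpr (by positivity)
    · simp only [J3]; field_simp; ring
  · refine f0_at_einstein_point (lam := (M + N) / (2 * (L + M + N)))
      (by positivity) (by positivity) (by positivity) rfl rfl rfl ?_ ?_ ?_ ?_ ?_
    · unfold r1; field_simp; ring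
    · unfold r2; field_simp; ring
    · unfold r3; field_simp; ring
    · simp only [J4]; rw [neg_div]; exact neg_ne_zero.mpr (by positivity)
    · simp only [J4]; field_simp; ring
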